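/- (Conditional mean of RWI increments.) For every n ≥ 0, almost surely E[ξ_{n+1} | F_n] = μ + θ·ε_n, where ε_n = 1_{S_n∈V_0} − 1_{S_n∈V_1}. -/

import Mathlib

open MeasureTheory ProbabilityTheory Real Filter Set
open scoped BigOperators NNReal

noncomputable section

namespace RWI

abbrev E : Type := EuclideanSpace ℝ (Fin 3)

def vec (x y z : ℝ) : E := (EuclideanSpace.equiv (Fin 3) ℝ).symm ![x, y, z]

/-- The two families of vertices of the `1h` ice lattice. -/
def V (a h : ℝ) (i : Fin 2) : Set E :=
  {v | ∃ k l n : ℤ, v = vec (a * ((i : ℕ) + (3 / 2) * k))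
      (a * ((Real.sqrt 3 / 2) * k + Real.sqrt 3 * l)) (h * n)}

/-- Horizontal jump from a vertex of type `i` in direction `j`. -/
def w (a : ℝ) (i : Fin 2) (j : Fin 3) : E :=
  vec (a * Real.cos (2 * (j : ℕ) * π / 3 + (i : ℕ) * π))
      (a * Real.sin (2 * (j : ℕ) * π / 3 + (i : ℕ) * π)) 0

/-- `S` is a random walk on ice with parameters `a, h, p, α, q` and natural filtration `F`. -/
structure IsRWI {Ω : Type} [MeasurableSpace Ω] (P : Measure Ω)
    (a h p α : ℝ) (q : Fin 2 → Fin 3 → ℝ)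
    (S : ℕ → Ω → E) (F : ℕ → MeasurableSpace Ω) : Prop where
  prob : IsProbabilityMeasure P
  ha : 0 < a
  hh : 0 < h
  hp0 : 0 ≤ p
  hp1 : p ≤ 1
  hα0 : 0 < α
  hα1 : α < 1
  hq : ∀ i j, 0 ≤ q i j
  hqsum : ∀ i, q i 0 + q i 1 + q i 2 = 1 - p
  hS0 : ∀ ω, S 0 ω = 0
  hSmeas : ∀ n, Measurable (S n)
  hF : ∀ n, F n =
    MeasurableSpace.comap (fun ω (k : Fin n) => S ((k : ℕ) + 1) ω - S (k : ℕ) ω)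
      MeasurableSpace.pi
  hTrans : ∀ (n : ℕ) (f : E → ℝ), Measurable f → (∃ C, ∀ x, |f x| ≤ C) →
    P[fun ω => f (S (n + 1) ω)|F n] =ᵐ[P]
      fun ω => ∑ i : Fin 2, (V a h i).indicator (fun _ => (1 : ℝ)) (S n ω) *
        (α * p * f (S n ω + vec 0 0 h) + (1 - α) * p * f (S n ω + vec 0 0 (-h)) +
          ∑ j : Fin 3, q i j * f (S n ω + w a i j))

def uu (q : Fin 2 → Fin 3 → ℝ) (i : Fin 2) : ℝ := q i 1 + q i 2

def vv (q : Fin 2 → Fin 3 → ℝ) (i : Fin 2) : ℝ := q i 1 - q i 2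

/-- The drift vector `μ` of the RWI. -/
def muI (a h p α : ℝ) (q : Fin 2 → Fin 3 → ℝ) : E :=
  vec (3 * a / 4 * (-(uu q 0) + uu q 1)) (a * Real.sqrt 3 / 4 * (vv q 0 - vv q 1))
    (h * p * (2 * α - 1))

/-- The vector `θ` of the RWI. -/
def thetaI (a p : ℝ) (q : Fin 2 → Fin 3 → ℝ) : E :=
  vec (a * ((1 - p) - 3 / 4 * (uu q 0 + uu q 1))) (a * Real.sqrt 3 / 4 * (vv q 0 + vv q 1)) 0

/-- The sign process `ε_n = 1_{S_n ∈ V_0} - 1_{S_n ∈ V_1}`. -/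
def epsI {Ω : Type} (a h : ℝ) (S : ℕ → Ω → E) (n : ℕ) (ω : Ω) : ℝ :=
  (V a h 0).indicator (fun _ => (1 : ℝ)) (S n ω) - (V a h 1).indicator (fun _ => (1 : ℝ)) (S n ω)

end RWI

namespace RWI

lemma norm_vec_vertical (t : ℝ) : ‖vec 0 0 t‖ = |t| := by
  simp [vec, EuclideanSpace.norm_eq, Fin.sum_univ_three, Real.sqrt_sq_eq_abs]

lemma norm_w (a : ℝ) (i : Fin 2) (j : Fin 3) : ‖w a i j‖ = |a| := by
  rw [← Real.sqrt_sq_eq_abs]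
  simp only [w, vec, EuclideanSpace.norm_eq, Fin.sum_univ_three, Real.norm_eq_abs, sq_abs]
  congr 1
  simp only [EuclideanSpace.equiv, PiLp.continuousLinearEquiv_symm_apply, PiLp.toLp_apply,
    Matrix.cons_val]
  rw [mul_pow, mul_pow, ← mul_add, Real.cos_sq_add_sin_sq]
  ring

lemma cos_two_pi_div_three : Real.cos (2 * π / 3) = -(1 / 2) := by
  rw [show 2 * π / 3 = π - π / 3 by ring, Real.cos_pi_sub, Real.cos_pi_div_three]

lemma sin_two_pi_div_three : Real.sin (2 * π / 3) = √3 / 2 := by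
  rw [show 2 * π / 3 = π - π / 3 by ring, Real.sin_pi_sub, Real.sin_pi_div_three]

lemma cos_four_pi_div_three : Real.cos (2 * 2 * π / 3) = -(1 / 2) := by
  rw [show 2 * 2 * π / 3 = π / 3 + π by ring, Real.cos_add_pi, Real.cos_pi_div_three]

lemma sin_four_pi_div_three : Real.sin (2 * 2 * π / 3) = -(√3 / 2) := by
  rw [show 2 * 2 * π / 3 = π / 3 + π by ring, Real.sin_add_pi, Real.sin_pi_div_three]

/-- The mean increment from a vertex of type `i`. -/
def drift (a h p α : ℝ) (q : Fin 2 → Fin 3 → ℝ) (i : Fin 2) : E :=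
  (α * p) • vec 0 0 h + ((1 - α) * p) • vec 0 0 (-h) + ∑ j, q i j • w a i j

lemma drift_combination (a h p α : ℝ) (q : Fin 2 → Fin 3 → ℝ)
    (hqsum : ∀ i, q i 0 + q i 1 + q i 2 = 1 - p) {s t : ℝ} (hst : s + t = 1) :
    s • drift a h p α q 0 + t • drift a h p α q 1 =
      muI a h p α q + (s - t) • thetaI a p q := by
  have h0 : q 0 0 = 1 - p - q 0 1 - q 0 2 := by linarith [hqsum 0]
  have h1 : q 1 0 = 1 - p - q 1 1 - q 1 2 := by linarith [hqsum 1]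
  obtain rfl : t = 1 - s := by linarith
  ext c
  fin_cases c <;>
  simp [drift, muI, thetaI, uu, vv, w, vec, Fin.sum_univ_three, Real.cos_add_pi, Real.sin_add_pi,
    cos_two_pi_div_three, sin_two_pi_div_three, cos_four_pi_div_three, sin_four_pi_div_three,
    h0, h1] <;> ring

namespace IsRWI

variable {Ω : Type} [mΩ : MeasurableSpace Ω] {P : Measure Ω} {a h p α : ℝ}
  {q : Fin 2 → Fin 3 → ℝ} {S : ℕ → Ω → E} {F : ℕ → MeasurableSpace Ω}

lemma filtration_le (hRW : IsRWI P a h p α q S F) (n : ℕ) : F n ≤ mΩ := by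
  rw [hRW.hF n]
  refine Measurable.comap_le ?_
  exact measurable_pi_lambda _ fun k => (hRW.hSmeas _).sub (hRW.hSmeas _)

lemma measurable_position (hRW : IsRWI P a h p α q S F) (n : ℕ) : Measurable[F n] (S n) := by
  have hsum : S n = fun ω => ∑ k : Fin n, (S ((k : ℕ) + 1) ω - S (k : ℕ) ω) := by
    ext1 ω
    rw [Fin.sum_univ_eq_sum_range (fun k => S (k + 1) ω - S k ω), Finset.sum_range_sub (S · ω),
      hRW.hS0, sub_zero]
  rw [hsum, hRW.hF n]
  have hg : Measurable fun x : Fin n → E => ∑ k, x k := by fun_prop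
  exact hg.comp (comap_measurable _)

lemma ae_indicator_add_eq_one (hRW : IsRWI P a h p α q S F) (n : ℕ) :
    ∀ᵐ ω ∂P, (V a h 0).indicator (fun _ => (1 : ℝ)) (S n ω) +
      (V a h 1).indicator (fun _ => (1 : ℝ)) (S n ω) = 1 := by
  have := hRW.prob
  have ht := hRW.hTrans n (fun _ => 1) measurable_const ⟨1, by simp⟩
  rw [condExp_const (hRW.filtration_le n)] at ht
  filter_upwards [ht] with ω hω
  have hone : ∀ i, α * p + (1 - α) * p + (q i 0 + q i 1 + q i 2) = 1 := fun i => by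
    rw [hRW.hqsum i]; ring
  simp only [Fin.sum_univ_two, Fin.sum_univ_three, mul_one, hone] at hω
  exact hω.symm

lemma norm_add_step_le (hRW : IsRWI P a h p α q S F) {x : E} {r : ℝ} (hx : ‖x‖ ≤ r) :
    ‖x + vec 0 0 h‖ ≤ r + (a + h) ∧ ‖x + vec 0 0 (-h)‖ ≤ r + (a + h) ∧
      ∀ i j, ‖x + w a i j‖ ≤ r + (a + h) := by
  have ha := hRW.ha
  have hh := hRW.hh
  refine ⟨(norm_add_le _ _).trans ?_, (norm_add_le _ _).trans ?_,
    fun i j => (norm_add_le _ _).trans ?_⟩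
  · rw [norm_vec_vertical, abs_of_pos hh]; linarith
  · rw [norm_vec_vertical, abs_neg, abs_of_pos hh]; linarith
  · rw [norm_w, abs_of_pos ha]; linarith

lemma ae_norm_le (hRW : IsRWI P a h p α q S F) (n : ℕ) :
    ∀ᵐ ω ∂P, ‖S n ω‖ ≤ n * (a + h) := by
  have := hRW.prob
  induction n with
  | zero => simp [hRW.hS0]
  | succ n ih =>
    set r : ℝ := n * (a + h) with hr
    have hB : MeasurableSet {x : E | r + (a + h) < ‖x‖} :=
      measurableSet_lt measurable_const measurable_norm
    set f : E → ℝ := {x : E | r + (a + h) < ‖x‖}.indicator fun _ => 1 with hf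
    have hf0 : ∀ x, 0 ≤ f x := fun x => indicator_nonneg (fun _ _ => zero_le_one) x
    have hf1 : ∀ x, |f x| ≤ 1 := fun x => by
      rw [abs_of_nonneg (hf0 x)]
      exact indicator_le_self' (fun _ _ => zero_le_one) x
    have hfm : Measurable f := measurable_const.indicator hB
    have hfz : ∀ x, ‖x‖ ≤ r + (a + h) → f x = 0 := fun x hx =>
      indicator_of_notMem (by simpa using hx) _
    have hce : P[fun ω => f (S (n + 1) ω)|F n] =ᵐ[P] 0 := by
      filter_upwards [hRW.hTrans n f hfm ⟨1, hf1⟩, ih] with ω hω hle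
      obtain ⟨hup, hdown, hside⟩ := hRW.norm_add_step_le hle
      rw [hω]
      simp [hfz _ hup, hfz _ hdown, hfz _ (hside _ _)]
    have hint : Integrable (fun ω => f (S (n + 1) ω)) P :=
      .of_bound (hfm.comp (hRW.hSmeas _)).aestronglyMeasurable 1 (ae_of_all _ fun ω => hf1 _)
    have hzero : ∫ ω, f (S (n + 1) ω) ∂P = 0 := by
      rw [← integral_condExp (hRW.filtration_le n), integral_congr_ae hce]
      simp
    rw [integral_eq_zero_iff_of_nonneg (fun ω => hf0 _) hint] at hzero
    filter_upwards [hzero] with ω hω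
    by_contra hlt
    have hmem : S (n + 1) ω ∈ {x : E | r + (a + h) < ‖x‖} := by
      rw [mem_ofPred_eq, hr]
      push_cast at hlt
      linarith
    simp [hf, indicator_of_mem hmem] at hω

lemma integrable_position (hRW : IsRWI P a h p α q S F) (n : ℕ) : Integrable (S n) P := by
  have := hRW.prob
  exact .of_bound (hRW.hSmeas n).aestronglyMeasurable _ (hRW.ae_norm_le n)

lemma condExp_position_apply (hRW : IsRWI P a h p α q S F) (n : ℕ) (c : Fin 3) :
    P[fun ω => S (n + 1) ω c|F n] =ᵐ[P] fun ω => (S n ω +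
      ((V a h 0).indicator (fun _ => (1 : ℝ)) (S n ω) • drift a h p α q 0 +
        (V a h 1).indicator (fun _ => (1 : ℝ)) (S n ω) • drift a h p α q 1)) c := by
  set r : ℝ := n * (a + h) with hr
  set f : E → ℝ := {x : E | ‖x‖ ≤ r + (a + h)}.indicator fun x => x c with hf
  have hfm : Measurable f :=
    Measurable.indicator (by fun_prop) (measurableSet_le measurable_norm measurable_const)
  have hr0 : 0 ≤ r + (a + h) := by
    have := hRW.ha
    have := hRW.hh
    positivity
  have hfb : ∀ x, |f x| ≤ r + (a + h) := fun x => by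
    by_cases hx : ‖x‖ ≤ r + (a + h)
    · rw [hf, indicator_of_mem (by exact hx)]
      exact (PiLp.norm_apply_le x c).trans hx
    · rw [hf, indicator_of_notMem (by exact hx), abs_zero]
      exact hr0
  have hfe : ∀ x, ‖x‖ ≤ r + (a + h) → f x = x c := fun x hx => indicator_of_mem (by exact hx) _
  have hcongr : (fun ω => S (n + 1) ω c) =ᵐ[P] fun ω => f (S (n + 1) ω) := by
    filter_upwards [hRW.ae_norm_le (n + 1)] with ω hω
    refine (hfe _ (hω.trans_eq ?_)).symm
    push_cast
    ring
  refine (condExp_congr_ae hcongr).trans ?_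
  filter_upwards [hRW.hTrans n f hfm ⟨_, hfb⟩, hRW.ae_norm_le n,
    hRW.ae_indicator_add_eq_one n] with ω hω hle hone
  obtain ⟨hup, hdown, hside⟩ := hRW.norm_add_step_le hle
  rw [hω]
  have h0 : q 0 0 = 1 - p - q 0 1 - q 0 2 := by linarith [hRW.hqsum 0]
  have h1 : q 1 0 = 1 - p - q 1 1 - q 1 2 := by linarith [hRW.hqsum 1]
  simp only [hfe _ hup, hfe _ hdown, hfe _ (hside _ _), Fin.sum_univ_two, Fin.sum_univ_three,
    drift, PiLp.add_apply, PiLp.smul_apply, smul_eq_mul, h0, h1]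
  linear_combination S n ω c * hone

end IsRWI

end RWI

theorem rwi_condexp_increment {Ω : Type} [MeasurableSpace Ω] (P : Measure Ω)
    (a h p α : ℝ) (q : Fin 2 → Fin 3 → ℝ)
    (S : ℕ → Ω → RWI.E) (F : ℕ → MeasurableSpace Ω)
    (hRW : RWI.IsRWI P a h p α q S F) :
    ∀ n : ℕ, P[fun ω => S (n + 1) ω - S n ω|F n] =ᵐ[P]
      fun ω => RWI.muI a h p α q + RWI.epsI a h S n ω • RWI.thetaI a p q := by
  intro n
  have := hRW.prob
  have hint := (hRW.integrable_position (n + 1)).sub (hRW.integrable_position n)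
  have hcoord : ∀ c : Fin 3, ∀ᵐ ω ∂P, (P[fun ω => S (n + 1) ω - S n ω|F n]) ω c =
      (RWI.muI a h p α q + RWI.epsI a h S n ω • RWI.thetaI a p q) c := fun c => by
    let L : RWI.E →L[ℝ] ℝ := EuclideanSpace.proj c
    have hcomm := L.comp_condExp_comm (m := F n) hint
    have hsub := condExp_sub (L.integrable_comp (hRW.integrable_position (n + 1)))
      (L.integrable_comp (hRW.integrable_position n)) (F n)
    have hself : P[fun ω => L (S n ω)|F n] = fun ω => L (S n ω) :=
      condExp_of_stronglyMeasurable (hRW.filtration_le n)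
        (L.measurable.comp (hRW.measurable_position n)).stronglyMeasurable
        (L.integrable_comp (hRW.integrable_position n))
    have heq : L ∘ (S (n + 1) - S n) = (fun ω => L (S (n + 1) ω)) - fun ω => L (S n ω) := by
      ext ω
      simp
    rw [heq] at hcomm
    filter_upwards [hcomm, hsub, hRW.condExp_position_apply n c,
      hRW.ae_indicator_add_eq_one n] with ω hω hsubω hposω hone
    refine hω.trans (hsubω.trans ?_)
    rw [Pi.sub_apply, hself]
    refine (congrArg (· - S n ω c) hposω).trans ?_
    rw [RWI.epsI, ← RWI.drift_combination a h p α q hRW.hqsum hone, PiLp.add_apply,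
      add_sub_cancel_left]
  filter_upwards [ae_all_iff.2 hcoord] with ω hω
  ext c
  exact hω c
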